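/- Let μ ∈ (0,1]. There is a constant C, independent of μ, such that for every λ > 0, every t ∈ ℝ \ {0} and every Schwartz function f on ℝ, ‖S_{μ,1}(t) P_λ f‖_{L^∞(ℝ)} ≤ C μ^{-1/2} |t|^{-1/2} λ^{-1/2} ⟨√μ λ⟩^{5/4} ‖f‖_{L^1(ℝ)}. -/

import Mathlib

noncomputable section

open MeasureTheory SchwartzMap
open scoped FourierTransform ENNReal

/-- The Japanese bracket `⟨x⟩ = (1 + x²)^{1/2}`. -/
def jap (x : ℝ) : ℝ := (1 + x ^ 2) ^ ((1 : ℝ) / 2)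

/-- The symbol `m₁(ξ) = ξ (tanh|ξ|/|ξ|)^{1/2}`, with `m₁(0) = 0`. -/
def m1 (ξ : ℝ) : ℝ :=
  if ξ = 0 then 0 else ξ * Real.sqrt (Real.tanh |ξ| / |ξ|)

/-- The propagator `S_{μ,1}(t) f = (e^{i(t/√μ) m₁(√μ ξ)} f̂(ξ))^∨`. -/
def prop1 (μ t : ℝ) (f : ℝ → ℂ) : ℝ → ℂ :=
  𝓕⁻ (fun ξ : ℝ =>
    Complex.exp (Complex.I * ((t / Real.sqrt μ) * m1 (Real.sqrt μ * ξ) : ℝ)) * 𝓕 f ξ)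

/-- The Littlewood–Paley projection `P_λ`, `(P_λ f)^(ξ) = β(|ξ|/λ) f̂(ξ)`,
where `β(s) = χ(s) - χ(2s)`. -/
def proj1 (χ : ℝ → ℝ) (lam : ℝ) (f : ℝ → ℂ) : ℝ → ℂ :=
  𝓕⁻ (fun ξ : ℝ => ((χ (|ξ| / lam) - χ (2 * |ξ| / lam) : ℝ) : ℂ) * 𝓕 f ξ)

/-!
On `(0, ∞)` the symbol is `m₁(x) = √(x tanh x)`, which is concave with `-m₁''(x) ≳ x ⟨x⟩^{-5/2}`:
near zero `m₁''` behaves like `-x`, and at infinity like the second derivative of `√x`. At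
frequencies of size `λ` the phase `(t/√μ) m₁(√μ ξ) + 2π x ξ` therefore has second derivative at
least of size `|t| μ λ ⟨√μ λ⟩^{-5/2}`, whatever the value of `x`, and van der Corput's second
derivative test bounds the kernel of `S_{μ,1}(t) P_λ` by the inverse square root of this quantity.
The amplitude `β(ξ/λ)` enters only through its total variation, which does not depend on `λ`.
Since the operator is convolution with its kernel, this is the claimed `L¹ → L^∞` bound.
-/

open Set
open scoped Convolution

section VanDerCorput

variable {a b κ : ℝ} {φ φ' φ'' : ℝ → ℝ}

lemma norm_integral_exp_phase_le_sub (hab : a ≤ b) (φ : ℝ → ℝ) :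
    ‖∫ x in a..b, Complex.exp (Complex.I * φ x)‖ ≤ b - a := by
  have h := intervalIntegral.norm_integral_le_of_norm_le_const (a := a) (b := b)
    fun x _ ↦ (Complex.norm_exp_I_mul_ofReal (φ x)).le
  rwa [one_mul, abs_of_nonneg (sub_nonneg.2 hab)] at h

lemma continuousOn_exp_phase {s : Set ℝ} (hφ : ∀ x ∈ s, HasDerivAt φ (φ' x) x) :
    ContinuousOn (fun x ↦ Complex.exp (Complex.I * φ x)) s := by
  have hφc : ContinuousOn φ s := HasDerivAt.continuousOn hφ
  fun_prop

lemma integral_exp_phase_add_adjacent {c : ℝ} (hφ : ∀ x ∈ Icc a b, HasDerivAt φ (φ' x) x)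
    (hc : c ∈ Icc a b) :
    (∫ x in a..c, Complex.exp (Complex.I * φ x)) + ∫ x in c..b, Complex.exp (Complex.I * φ x) =
      ∫ x in a..b, Complex.exp (Complex.I * φ x) := by
  have hcont := continuousOn_exp_phase hφ
  exact intervalIntegral.integral_add_adjacent_intervals
    ((hcont.mono (Icc_subset_Icc_right hc.2)).intervalIntegrable_of_Icc hc.1)
    ((hcont.mono (Icc_subset_Icc_left hc.1)).intervalIntegrable_of_Icc hc.2)

lemma norm_integral_smul_deriv_le {E : Type*} [NormedAddCommGroup E] [NormedSpace ℝ E]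
    [CompleteSpace E] {u u' : ℝ → ℝ} {v v' : ℝ → E} (hab : a ≤ b)
    (hu : ∀ x ∈ Icc a b, HasDerivAt u (u' x) x) (hu' : ∀ x ∈ Icc a b, 0 ≤ u' x)
    (hv : ∀ x ∈ Icc a b, HasDerivAt v (v' x) x) (hv' : IntervalIntegrable v' volume a b)
    (hv_le : ∀ x ∈ Icc a b, ‖v x‖ ≤ 1) :
    ‖∫ x in a..b, u x • v' x‖ ≤ |u b| + |u a| + (u b - u a) := by
  have hu'_int : IntervalIntegrable u' volume a b := by
    refine intervalIntegral.intervalIntegrable_deriv_of_nonneg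
      (HasDerivAt.continuousOn (uIcc_of_le hab ▸ hu)) ?_ ?_ <;>
      rw [min_eq_left hab, max_eq_right hab]
    exacts [fun x hx ↦ hu x (Ioo_subset_Icc_self hx), fun x hx ↦ hu' x (Ioo_subset_Icc_self hx)]
  have hsmul_le : ∀ r : ℝ, ∀ x ∈ Icc a b, ‖r • v x‖ ≤ |r| := fun r x hx ↦ by
    simpa [norm_smul] using mul_le_of_le_one_right (abs_nonneg r) (hv_le x hx)
  have hrest : ‖∫ x in a..b, u' x • v x‖ ≤ u b - u a := by
    rw [← intervalIntegral.integral_eq_sub_of_hasDerivAt (uIcc_of_le hab ▸ hu) hu'_int]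
    refine intervalIntegral.norm_integral_le_of_norm_le hab
      (Filter.Eventually.of_forall fun x hx ↦ ?_) hu'_int
    have hx' := Ioc_subset_Icc_self hx
    exact (hsmul_le _ x hx').trans_eq (abs_of_nonneg (hu' x hx'))
  rw [intervalIntegral.integral_smul_deriv_eq_deriv_smul (uIcc_of_le hab ▸ hu)
    (uIcc_of_le hab ▸ hv) hu'_int hv']
  exact norm_sub_le_of_le (norm_sub_le_of_le (hsmul_le _ b (right_mem_Icc.2 hab))
    (hsmul_le _ a (left_mem_Icc.2 hab))) hrest

lemma norm_integral_exp_phase_le_two_div_deriv (hab : a ≤ b)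
    (hφ : ∀ x ∈ Icc a b, HasDerivAt φ (φ' x) x) (hφ' : ∀ x ∈ Icc a b, HasDerivAt φ' (φ'' x) x)
    (hφ'' : ∀ x ∈ Icc a b, 0 ≤ φ'' x) (ha : 0 < φ' a) :
    ‖∫ x in a..b, Complex.exp (Complex.I * φ x)‖ ≤ 2 / φ' a := by
  have hφ'c : ContinuousOn φ' (Icc a b) := HasDerivAt.continuousOn hφ'
  have hmono : MonotoneOn φ' (Icc a b) :=
    monotoneOn_of_hasDerivWithinAt_nonneg (convex_Icc a b) hφ'c
      (fun x hx ↦ (hφ' x (interior_subset hx)).hasDerivWithinAt)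
      fun x hx ↦ hφ'' x (interior_subset hx)
  have hpos : ∀ x ∈ Icc a b, 0 < φ' x := fun x hx ↦
    ha.trans_le (hmono (left_mem_Icc.2 hab) hx hx.1)
  have hexp_int : IntervalIntegrable
      (fun x ↦ Complex.exp (Complex.I * φ x) * (Complex.I * φ' x)) volume a b := by
    have hcont := continuousOn_exp_phase hφ
    exact ContinuousOn.intervalIntegrable_of_Icc hab (by fun_prop)
  -- `e^{iφ}` is `(iφ')⁻¹` times its own derivative, and `1/φ'` is monotone.
  have hparts := norm_integral_smul_deriv_le hab
    (fun x hx ↦ ((hφ' x hx).fun_inv (hpos x hx).ne').fun_neg)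
    (fun x hx ↦ by rw [neg_div, neg_neg]; exact div_nonneg (hφ'' x hx) (sq_nonneg _))
    (fun x hx ↦ ((hφ x hx).ofReal_comp.const_mul Complex.I).cexp) hexp_int
    (fun x _ ↦ (Complex.norm_exp_I_mul_ofReal (φ x)).le)
  have hintegrand : ∫ x in a..b, -(φ' x)⁻¹ • (Complex.exp (Complex.I * φ x) * (Complex.I * φ' x)) =
      -Complex.I * ∫ x in a..b, Complex.exp (Complex.I * φ x) := by
    rw [← intervalIntegral.integral_const_mul]
    refine intervalIntegral.integral_congr fun x hx ↦ ?_
    have hne : (φ' x : ℂ) ≠ 0 := mod_cast (hpos x (uIcc_of_le hab ▸ hx)).ne'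
    simp only [Complex.real_smul]
    push_cast
    field_simp
  calc ‖∫ x in a..b, Complex.exp (Complex.I * φ x)‖
      = ‖-Complex.I * ∫ x in a..b, Complex.exp (Complex.I * φ x)‖ := by simp
    _ ≤ |-(φ' b)⁻¹| + |-(φ' a)⁻¹| + (-(φ' b)⁻¹ - -(φ' a)⁻¹) := hintegrand ▸ hparts
    _ = 2 / φ' a := by
        rw [abs_neg, abs_neg, abs_of_pos (inv_pos.2 ha),
          abs_of_pos (inv_pos.2 (hpos b (right_mem_Icc.2 hab)))]
        ring

lemma norm_integral_exp_phase_le_of_deriv_left_nonneg (hab : a ≤ b) (hκ : 0 < κ)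
    (hφ : ∀ x ∈ Icc a b, HasDerivAt φ (φ' x) x) (hφ' : ∀ x ∈ Icc a b, HasDerivAt φ' (φ'' x) x)
    (hφ'' : ∀ x ∈ Icc a b, κ ≤ φ'' x) (ha : 0 ≤ φ' a) :
    ‖∫ x in a..b, Complex.exp (Complex.I * φ x)‖ ≤ 3 / √κ := by
  have hδ : 0 < 1 / √κ := by positivity
  rcases le_total b (a + 1 / √κ) with hb | hb
  · calc _ ≤ b - a := norm_integral_exp_phase_le_sub hab φ
      _ ≤ 1 / √κ := by linarith
      _ ≤ 3 / √κ := by gcongr; norm_num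
  set c := a + 1 / √κ with hc
  have hcI : c ∈ Icc a b := ⟨by linarith, hb⟩
  have hderiv : √κ ≤ φ' c := by
    have hmvt := (convex_Icc a b).mul_sub_le_image_sub_of_le_deriv (HasDerivAt.continuousOn hφ')
      (fun y hy ↦ (hφ' y (interior_subset hy)).differentiableAt.differentiableWithinAt)
      (fun y hy ↦ (hφ' y (interior_subset hy)).deriv ▸ hφ'' y (interior_subset hy))
      a (left_mem_Icc.2 hab) c hcI hcI.1
    have hκδ : κ * (c - a) = √κ := by
      rw [hc, add_sub_cancel_left, mul_one_div, Real.div_sqrt]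
    linarith
  have hsub : Icc c b ⊆ Icc a b := Icc_subset_Icc_left hcI.1
  rw [← integral_exp_phase_add_adjacent hφ hcI]
  calc _ ≤ (c - a) + 2 / φ' c := norm_add_le_of_le (norm_integral_exp_phase_le_sub hcI.1 φ)
        (norm_integral_exp_phase_le_two_div_deriv hb (fun x hx ↦ hφ x (hsub hx))
          (fun x hx ↦ hφ' x (hsub hx)) (fun x hx ↦ hκ.le.trans (hφ'' x (hsub hx)))
          ((Real.sqrt_pos.2 hκ).trans_le hderiv))
    _ ≤ 1 / √κ + 2 / √κ := by
        rw [hc, add_sub_cancel_left]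
        gcongr
    _ = 3 / √κ := by ring

lemma norm_integral_exp_phase_le_of_deriv_right_nonpos (hab : a ≤ b) (hκ : 0 < κ)
    (hφ : ∀ x ∈ Icc a b, HasDerivAt φ (φ' x) x) (hφ' : ∀ x ∈ Icc a b, HasDerivAt φ' (φ'' x) x)
    (hφ'' : ∀ x ∈ Icc a b, κ ≤ φ'' x) (hb : φ' b ≤ 0) :
    ‖∫ x in a..b, Complex.exp (Complex.I * φ x)‖ ≤ 3 / √κ := by
  have hneg : ∀ x ∈ Icc (-b) (-a), -x ∈ Icc a b := fun x hx ↦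
    ⟨le_neg.1 hx.2, neg_le.1 hx.1⟩
  have h := norm_integral_exp_phase_le_of_deriv_left_nonneg (neg_le_neg hab) hκ
    (φ := fun x ↦ φ (-x)) (φ' := fun x ↦ -φ' (-x)) (φ'' := fun x ↦ φ'' (-x))
    (fun x hx ↦ by simpa [Function.comp_def] using (hφ _ (hneg x hx)).scomp x (hasDerivAt_neg x))
    (fun x hx ↦ by
      simpa [Function.comp_def] using ((hφ' _ (hneg x hx)).scomp x (hasDerivAt_neg x)).fun_neg)
    (fun x hx ↦ hφ'' _ (hneg x hx)) (by simpa using hb)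
  rwa [intervalIntegral.integral_comp_neg (fun x ↦ Complex.exp (Complex.I * φ x)),
    neg_neg, neg_neg] at h

lemma norm_integral_exp_phase_le_of_le_deriv2 (hab : a ≤ b) (hκ : 0 < κ)
    (hφ : ∀ x ∈ Icc a b, HasDerivAt φ (φ' x) x) (hφ' : ∀ x ∈ Icc a b, HasDerivAt φ' (φ'' x) x)
    (hφ'' : ∀ x ∈ Icc a b, κ ≤ φ'' x) :
    ‖∫ x in a..b, Complex.exp (Complex.I * φ x)‖ ≤ 6 / √κ := by
  have h36 : 3 / √κ ≤ 6 / √κ := by gcongr; norm_num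
  rcases le_total 0 (φ' a) with ha | ha
  · exact (norm_integral_exp_phase_le_of_deriv_left_nonneg hab hκ hφ hφ' hφ'' ha).trans h36
  rcases le_total (φ' b) 0 with hb | hb
  · exact (norm_integral_exp_phase_le_of_deriv_right_nonpos hab hκ hφ hφ' hφ'' hb).trans h36
  obtain ⟨c, hc, hc0⟩ := intermediate_value_Icc hab (HasDerivAt.continuousOn hφ') ⟨ha, hb⟩
  have hsubl : Icc a c ⊆ Icc a b := Icc_subset_Icc_right hc.2
  have hsubr : Icc c b ⊆ Icc a b := Icc_subset_Icc_left hc.1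
  rw [← integral_exp_phase_add_adjacent hφ hc, show 6 / √κ = 3 / √κ + 3 / √κ by ring]
  exact norm_add_le_of_le
    (norm_integral_exp_phase_le_of_deriv_right_nonpos hc.1 hκ (fun x hx ↦ hφ x (hsubl hx))
      (fun x hx ↦ hφ' x (hsubl hx)) (fun x hx ↦ hφ'' x (hsubl hx)) hc0.le)
    (norm_integral_exp_phase_le_of_deriv_left_nonneg hc.2 hκ (fun x hx ↦ hφ x (hsubr hx))
      (fun x hx ↦ hφ' x (hsubr hx)) (fun x hx ↦ hφ'' x (hsubr hx)) hc0.ge)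

lemma norm_integral_exp_neg_phase (φ : ℝ → ℝ) (a b : ℝ) :
    ‖∫ x in a..b, Complex.exp (Complex.I * (-φ x : ℝ))‖ =
      ‖∫ x in a..b, Complex.exp (Complex.I * φ x)‖ := by
  rw [← Complex.norm_conj, ← intervalIntegral.intervalIntegral_conj]
  simp [← Complex.exp_conj]

theorem norm_integral_exp_phase_le_of_le_abs_deriv2 (hab : a ≤ b) (hκ : 0 < κ)
    (hφ : ∀ x ∈ Icc a b, HasDerivAt φ (φ' x) x) (hφ' : ∀ x ∈ Icc a b, HasDerivAt φ' (φ'' x) x)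
    (hφ'' : ∀ x ∈ Icc a b, κ ≤ |φ'' x|) :
    ‖∫ x in a..b, Complex.exp (Complex.I * φ x)‖ ≤ 6 / √κ := by
  -- By Darboux, the derivative `φ''` has a constant sign although it need not be continuous.
  rcases hasDerivWithinAt_forall_lt_or_forall_gt_of_forall_ne (convex_Icc a b)
    (fun x hx ↦ (hφ' x hx).hasDerivWithinAt)
    (fun x hx ↦ abs_pos.1 (hκ.trans_le (hφ'' x hx))) with hsign | hsign
  · rw [← norm_integral_exp_neg_phase]
    exact norm_integral_exp_phase_le_of_le_deriv2 hab hκ (fun x hx ↦ (hφ x hx).neg)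
      (fun x hx ↦ (hφ' x hx).neg) fun x hx ↦ abs_of_neg (hsign x hx) ▸ hφ'' x hx
  · exact norm_integral_exp_phase_le_of_le_deriv2 hab hκ hφ hφ'
      fun x hx ↦ abs_of_pos (hsign x hx) ▸ hφ'' x hx

theorem norm_integral_exp_phase_mul_le {ψ ψ' : ℝ → ℂ} (hab : a ≤ b) (hκ : 0 < κ)
    (hφ : ∀ x ∈ Icc a b, HasDerivAt φ (φ' x) x) (hφ' : ∀ x ∈ Icc a b, HasDerivAt φ' (φ'' x) x)
    (hφ'' : ∀ x ∈ Icc a b, κ ≤ |φ'' x|) (hψ : ∀ x ∈ Icc a b, HasDerivAt ψ (ψ' x) x)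
    (hψ' : IntervalIntegrable ψ' volume a b) :
    ‖∫ x in a..b, Complex.exp (Complex.I * φ x) * ψ x‖ ≤
      6 / √κ * (‖ψ b‖ + ∫ x in a..b, ‖ψ' x‖) := by
  set E : ℝ → ℂ := fun x ↦ Complex.exp (Complex.I * φ x)
  have hE : ContinuousOn E (Icc a b) := continuousOn_exp_phase hφ
  have hE_int : IntervalIntegrable E volume a b := hE.intervalIntegrable_of_Icc hab
  set F : ℝ → ℂ := fun x ↦ ∫ y in a..x, E y
  have hF_deriv : ∀ x ∈ Ioo (min a b) (max a b), HasDerivAt F (E x) x := by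
    rw [min_eq_left hab, max_eq_right hab]
    intro x hx
    have hEo : ContinuousOn E (Ioo a b) := hE.mono Ioo_subset_Icc_self
    exact intervalIntegral.integral_hasDerivAt_right
      ((hE.mono (Icc_subset_Icc_right hx.2.le)).intervalIntegrable_of_Icc hx.1.le)
      (hEo.stronglyMeasurableAtFilter isOpen_Ioo x hx) (hEo.continuousAt (isOpen_Ioo.mem_nhds hx))
  have hF_le : ∀ x ∈ Icc a b, ‖F x‖ ≤ 6 / √κ := fun x hx ↦ by
    have hsub : Icc a x ⊆ Icc a b := Icc_subset_Icc_right hx.2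
    exact norm_integral_exp_phase_le_of_le_abs_deriv2 hx.1 hκ (fun y hy ↦ hφ y (hsub hy))
      (fun y hy ↦ hφ' y (hsub hy)) fun y hy ↦ hφ'' y (hsub hy)
  have hparts : ∫ x in a..b, ψ x * E x = ψ b * F b - ψ a * F a - ∫ x in a..b, ψ' x * F x :=
    intervalIntegral.integral_mul_deriv_eq_deriv_mul_of_hasDerivAt
      (HasDerivAt.continuousOn (uIcc_of_le hab ▸ hψ))
      (intervalIntegral.continuousOn_primitive_interval' hE_int left_mem_uIcc)
      (fun x hx ↦ hψ x (uIcc_of_le hab ▸ Ioo_subset_Icc_self hx)) hF_deriv hψ' hE_int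
  have hFa : F a = 0 := intervalIntegral.integral_same
  have hrest : ‖∫ x in a..b, ψ' x * F x‖ ≤ ∫ x in a..b, ‖ψ' x‖ * (6 / √κ) :=
    intervalIntegral.norm_integral_le_of_norm_le hab
      (Filter.Eventually.of_forall fun x hx ↦ norm_mul_le_of_le le_rfl
        (hF_le x (Ioc_subset_Icc_self hx))) (hψ'.norm.mul_const _)
  calc ‖∫ x in a..b, E x * ψ x‖
      = ‖ψ b * F b - ∫ x in a..b, ψ' x * F x‖ := by
        simp_rw [mul_comm (E _), hparts, hFa, mul_zero, sub_zero]
    _ ≤ ‖ψ b‖ * (6 / √κ) + ∫ x in a..b, ‖ψ' x‖ * (6 / √κ) :=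
        norm_sub_le_of_le (norm_mul_le_of_le le_rfl (hF_le b (right_mem_Icc.2 hab))) hrest
    _ = 6 / √κ * (‖ψ b‖ + ∫ x in a..b, ‖ψ' x‖) := by
        rw [intervalIntegral.integral_mul_const]
        ring

end VanDerCorput

section Symbol

lemma hasDerivAt_tanh (x : ℝ) : HasDerivAt Real.tanh (1 - Real.tanh x ^ 2) x := by
  have hcosh : Real.cosh x ≠ 0 := (Real.cosh_pos x).ne'
  have h := (Real.hasDerivAt_sinh x).fun_div (Real.hasDerivAt_cosh x) hcosh
  simp only [← Real.tanh_eq_sinh_div_cosh] at h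
  convert! h using 1
  rw [Real.tanh_eq_sinh_div_cosh]
  field_simp

lemma strictMono_tanh : StrictMono Real.tanh :=
  strictMono_of_hasDerivAt_pos hasDerivAt_tanh fun x ↦ sub_pos.2 (Real.tanh_sq_lt_one x)

lemma continuous_tanh : Continuous Real.tanh :=
  continuous_iff_continuousAt.2 fun x ↦ (hasDerivAt_tanh x).continuousAt

lemma tanh_pos {x : ℝ} (hx : 0 < x) : 0 < Real.tanh x :=
  Real.tanh_zero ▸ strictMono_tanh hx

lemma mul_tanh_pos {x : ℝ} (hx : 0 < x) : 0 < x * Real.tanh x :=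
  mul_pos hx (tanh_pos hx)

lemma hasDerivAt_mul_one_sub_tanh_sq (x : ℝ) :
    HasDerivAt (fun y ↦ y * (1 - Real.tanh y ^ 2))
      ((1 - Real.tanh x ^ 2) - 2 * x * Real.tanh x * (1 - Real.tanh x ^ 2)) x := by
  refine ((hasDerivAt_id x).fun_mul (((hasDerivAt_tanh x).fun_pow 2).const_sub 1)).congr_deriv ?_
  simp only [id]
  ring

lemma strictMonoOn_tanh_sub_mul :
    StrictMonoOn (fun x ↦ Real.tanh x - x * (1 - Real.tanh x ^ 2)) (Ici 0) := by
  have hderiv (x : ℝ) := (hasDerivAt_tanh x).fun_sub (hasDerivAt_mul_one_sub_tanh_sq x)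
  refine strictMonoOn_of_hasDerivWithinAt_pos (convex_Ici 0)
    (HasDerivAt.continuousOn fun x _ ↦ hderiv x) (fun x _ ↦ (hderiv x).hasDerivWithinAt) ?_
  intro x hx
  rw [interior_Ici, mem_Ioi] at hx
  have htanh := tanh_pos hx
  have hsech := sub_pos.2 (Real.tanh_sq_lt_one x)
  rw [sub_sub_cancel]
  positivity

lemma tanh_sub_mul_pos {x : ℝ} (hx : 0 < x) : 0 < Real.tanh x - x * (1 - Real.tanh x ^ 2) := by
  simpa using strictMonoOn_tanh_sub_mul self_mem_Ici hx.le hx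

/-- The derivative `m₁'` of the symbol on `(0, ∞)`, where `m₁(x) = √(x tanh x)`. -/
def m1Deriv (x : ℝ) : ℝ :=
  (Real.tanh x + x * (1 - Real.tanh x ^ 2)) / (2 * √(x * Real.tanh x))

/-- The quantity `-m₁''` on `(0, ∞)`, arranged as a sum of two nonnegative terms: the first governs
large frequencies and the second small ones. -/
def m1Curvature (x : ℝ) : ℝ :=
  (Real.tanh x - x * (1 - Real.tanh x ^ 2)) ^ 2 / (4 * √(x * Real.tanh x) ^ 3) +
    √(x * Real.tanh x) * (1 - Real.tanh x ^ 2)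

lemma m1_eq_sqrt {x : ℝ} (hx : 0 ≤ x) : m1 x = √(x * Real.tanh x) := by
  rcases hx.eq_or_lt with rfl | hx
  · simp [m1]
  · rw [m1, if_neg hx.ne', abs_of_pos hx]
    nth_rewrite 1 [← Real.sqrt_sq hx.le]
    rw [← Real.sqrt_mul (sq_nonneg x)]
    congr 1
    field_simp

lemma m1_neg (x : ℝ) : m1 (-x) = -m1 x := by
  by_cases hx : x = 0 <;> simp [m1, hx]

lemma measurable_m1 : Measurable m1 := by
  have htanh : Measurable Real.tanh := continuous_tanh.measurable
  exact Measurable.ite (measurableSet_singleton 0) measurable_const (by fun_prop)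

lemma hasDerivAt_mul_tanh (x : ℝ) :
    HasDerivAt (fun y ↦ y * Real.tanh y) (Real.tanh x + x * (1 - Real.tanh x ^ 2)) x :=
  ((hasDerivAt_id x).fun_mul (hasDerivAt_tanh x)).congr_deriv (by simp)

lemma hasDerivAt_m1 {x : ℝ} (hx : 0 < x) : HasDerivAt m1 (m1Deriv x) x := by
  refine ((hasDerivAt_mul_tanh x).sqrt (mul_tanh_pos hx).ne').congr_of_eventuallyEq ?_
  filter_upwards [lt_mem_nhds hx] with y hy using m1_eq_sqrt hy.le

lemma hasDerivAt_m1Deriv {x : ℝ} (hx : 0 < x) : HasDerivAt m1Deriv (-m1Curvature x) x := by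
  have hg := mul_tanh_pos hx
  refine (((hasDerivAt_tanh x).fun_add (hasDerivAt_mul_one_sub_tanh_sq x)).fun_div
    (((hasDerivAt_mul_tanh x).sqrt hg.ne').const_mul 2) (by positivity)).congr_deriv ?_
  rw [m1Curvature]
  have hs_sq : √(x * Real.tanh x) ^ 2 = x * Real.tanh x := Real.sq_sqrt hg.le
  have hs_pos : 0 < √(x * Real.tanh x) := Real.sqrt_pos.2 hg
  generalize √(x * Real.tanh x) = s at *
  field_simp
  rw [show s ^ 4 = (s ^ 2) ^ 2 by ring, hs_sq]
  ring

lemma jap_eq_sqrt (x : ℝ) : jap x = √(1 + x ^ 2) :=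
  (Real.sqrt_eq_rpow _).symm

lemma one_le_jap (x : ℝ) : 1 ≤ jap x := by
  rw [jap_eq_sqrt, Real.one_le_sqrt]
  linarith [sq_nonneg x]

lemma le_jap (x : ℝ) : x ≤ jap x := by
  rw [jap_eq_sqrt]
  exact Real.le_sqrt_of_sq_le (by linarith)

lemma jap_le_two_mul_jap {x y : ℝ} (h : |x| ≤ 2 * |y|) : jap x ≤ 2 * jap y := by
  rw [jap_eq_sqrt, jap_eq_sqrt, Real.sqrt_le_left (by positivity), mul_pow,
    Real.sq_sqrt (by positivity)]
  have hsq : x ^ 2 ≤ (2 * y) ^ 2 := sq_le_sq.2 (by rwa [abs_mul, abs_two])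
  linarith

lemma mul_sech_sq_sq_le_m1Curvature {x : ℝ} (hx : 0 < x) :
    x * (1 - Real.tanh x ^ 2) ^ 2 ≤ m1Curvature x := by
  have hsech := sub_pos.2 (Real.tanh_sq_lt_one x)
  have hsech_le : 1 - Real.tanh x ^ 2 ≤ 1 := sub_le_self _ (sq_nonneg _)
  have hsqrt : x * (1 - Real.tanh x ^ 2) ≤ √(x * Real.tanh x) := by
    refine Real.le_sqrt_of_sq_le ?_
    calc (x * (1 - Real.tanh x ^ 2)) ^ 2
        ≤ x * (x * (1 - Real.tanh x ^ 2)) := by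
          rw [sq]
          gcongr
          exact mul_le_of_le_one_right hx.le hsech_le
      _ ≤ x * Real.tanh x := by
          gcongr
          exact (sub_pos.1 (tanh_sub_mul_pos hx)).le
  calc x * (1 - Real.tanh x ^ 2) ^ 2
      = x * (1 - Real.tanh x ^ 2) * (1 - Real.tanh x ^ 2) := by ring
    _ ≤ √(x * Real.tanh x) * (1 - Real.tanh x ^ 2) := by gcongr
    _ ≤ m1Curvature x := le_add_of_nonneg_left (by positivity)

lemma sq_div_sqrt_cube_le_m1Curvature {x : ℝ} (hx : 0 < x) :
    (Real.tanh x - x * (1 - Real.tanh x ^ 2)) ^ 2 / (4 * √x ^ 3) ≤ m1Curvature x := by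
  have hg := mul_tanh_pos hx
  have hsech := sub_pos.2 (Real.tanh_sq_lt_one x)
  have hg_le : x * Real.tanh x ≤ x := mul_le_of_le_one_right hx.le (Real.tanh_lt_one x).le
  calc _ ≤ (Real.tanh x - x * (1 - Real.tanh x ^ 2)) ^ 2 / (4 * √(x * Real.tanh x) ^ 3) := by
        gcongr
    _ ≤ m1Curvature x := le_add_of_nonneg_right (by positivity)

lemma exists_mul_jap_rpow_le_m1Curvature :
    ∃ c : ℝ, 0 < c ∧ ∀ x : ℝ, 0 < x → c * (x * jap x ^ (-(5 / 2) : ℝ)) ≤ m1Curvature x := by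
  set sech₁ : ℝ := 1 - Real.tanh 1 ^ 2
  set d : ℝ := Real.tanh 1 - 1 * sech₁
  have hsech₁ : 0 < sech₁ := sub_pos.2 (Real.tanh_sq_lt_one 1)
  have hd : 0 < d := tanh_sub_mul_pos one_pos
  refine ⟨min (sech₁ ^ 2) (d ^ 2 / 4), by positivity, fun x hx ↦ ?_⟩
  have hjap : 0 < jap x := one_pos.trans_le (one_le_jap x)
  rcases le_total x 1 with hx1 | hx1
  · have hsech : sech₁ ≤ 1 - Real.tanh x ^ 2 := by
      have htanh := (tanh_pos hx).le
      exact sub_le_sub_left (by gcongr; exact strictMono_tanh.monotone hx1) 1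
    calc _ ≤ sech₁ ^ 2 * (x * 1) := by
          gcongr
          · exact min_le_left _ _
          · exact Real.rpow_le_one_of_one_le_of_nonpos (one_le_jap x) (by norm_num)
      _ ≤ x * (1 - Real.tanh x ^ 2) ^ 2 := by
          rw [mul_one, mul_comm]
          gcongr
      _ ≤ m1Curvature x := mul_sech_sq_sq_le_m1Curvature hx
  · have hd_le : d ≤ Real.tanh x - x * (1 - Real.tanh x ^ 2) :=
      strictMonoOn_tanh_sub_mul.monotoneOn (mem_Ici.2 zero_le_one) hx.le hx1
    have hpow : x * x ^ (-(5 / 2) : ℝ) = 1 / √x ^ 3 := by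
      rw [← Real.rpow_one_add' hx.le (by norm_num), Real.sqrt_eq_rpow, ← Real.rpow_natCast,
        ← Real.rpow_mul hx.le, one_div, ← Real.rpow_neg hx.le]
      norm_num
    calc _ ≤ d ^ 2 / 4 * (x * x ^ (-(5 / 2) : ℝ)) := by
          gcongr ?_ * (x * ?_)
          · exact min_le_right _ _
          · exact Real.rpow_le_rpow_of_nonpos hx (le_jap x) (by norm_num)
      _ = d ^ 2 / (4 * √x ^ 3) := by
          rw [hpow]
          field_simp
      _ ≤ (Real.tanh x - x * (1 - Real.tanh x ^ 2)) ^ 2 / (4 * √x ^ 3) := by gcongr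
      _ ≤ m1Curvature x := sq_div_sqrt_cube_le_m1Curvature hx

lemma exists_mul_jap_rpow_le_m1Curvature_of_dyadic :
    ∃ c : ℝ, 0 < c ∧ ∀ L x : ℝ, 0 < L → x ∈ Icc (L / 2) (2 * L) →
      c * (L * jap L ^ (-(5 / 2) : ℝ)) ≤ m1Curvature x := by
  obtain ⟨c, hc, hcurv⟩ := exists_mul_jap_rpow_le_m1Curvature
  refine ⟨c * (1 / 2 * 2 ^ (-(5 / 2) : ℝ)), by positivity, fun L x hL hx ↦ ?_⟩
  have hx0 : 0 < x := (half_pos hL).trans_le hx.1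
  have hjap : jap x ≤ 2 * jap L :=
    jap_le_two_mul_jap (by rw [abs_of_pos hx0, abs_of_pos hL]; exact hx.2)
  have hjapx : 0 < jap x := one_pos.trans_le (one_le_jap x)
  have hjapL : 0 < jap L := one_pos.trans_le (one_le_jap L)
  calc _ = c * (L / 2 * (2 * jap L) ^ (-(5 / 2) : ℝ)) := by
        rw [Real.mul_rpow zero_le_two hjapL.le]
        ring
    _ ≤ c * (x * jap x ^ (-(5 / 2) : ℝ)) := by
        gcongr ?_ * (?_ * ?_)
        · exact hx.1
        · exact Real.rpow_le_rpow_of_nonpos hjapx hjap (by norm_num)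
    _ ≤ m1Curvature x := hcurv x hx0

end Symbol

section Kernel

/-- The decay rate `μ^{-1/2} |t|^{-1/2} λ^{-1/2} ⟨√μ λ⟩^{5/4}` of the frequency-localised propagator
at dyadic frequency `λ`. -/
def decayRate (μ t lam : ℝ) : ℝ :=
  μ ^ (-(1 : ℝ) / 2) * |t| ^ (-(1 : ℝ) / 2) * lam ^ (-(1 : ℝ) / 2) *
    jap (√μ * lam) ^ ((5 : ℝ) / 4)

/-- The Fourier multiplier `e^{i(t/√μ) m₁(√μ ξ)} β(ξ/λ)` of the propagator `S_{μ,1}(t)` localised to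
frequencies of size `λ` by the profile `β`. -/
def localizedSymbol (μ t lam : ℝ) (β : ℝ → ℂ) (ξ : ℝ) : ℂ :=
  Complex.exp (Complex.I * ((t / √μ) * m1 (√μ * ξ) : ℝ)) * β (ξ / lam)

variable {μ t lam : ℝ} {β : ℝ → ℂ}

lemma decayRate_nonneg (hμ : 0 ≤ μ) (hlam : 0 ≤ lam) (t : ℝ) : 0 ≤ decayRate μ t lam := by
  have hjap := one_pos.trans_le (one_le_jap (√μ * lam))
  rw [decayRate]
  positivity

lemma decayRate_neg (μ t lam : ℝ) : decayRate μ (-t) lam = decayRate μ t lam := by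
  simp only [decayRate, abs_neg]

lemma one_div_sqrt_eq_mul_decayRate {c : ℝ} (hc : 0 ≤ c) (hμ : 0 ≤ μ) (hlam : 0 ≤ lam) (t : ℝ) :
    1 / √(|t| * √μ * (c * (√μ * lam * jap (√μ * lam) ^ (-(5 / 2) : ℝ)))) =
      c ^ (-(1 : ℝ) / 2) * decayRate μ t lam := by
  have hjap : 0 < jap (√μ * lam) := one_pos.trans_le (one_le_jap _)
  have hpow : (jap (√μ * lam) ^ (-(5 / 2) : ℝ)) ^ (-(1 : ℝ) / 2) =
      jap (√μ * lam) ^ ((5 : ℝ) / 4) := by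
    rw [← Real.rpow_mul hjap.le]
    norm_num
  calc _ = (c * (μ * |t| * lam * jap (√μ * lam) ^ (-(5 / 2) : ℝ))) ^ (-(1 : ℝ) / 2) := by
        rw [Real.sqrt_eq_rpow, one_div, ← Real.rpow_neg (by positivity), neg_div]
        congr 1
        linear_combination
          (|t| * c * lam * jap (√μ * lam) ^ (-(5 / 2) : ℝ)) * Real.mul_self_sqrt hμ
    _ = c ^ (-(1 : ℝ) / 2) * decayRate μ t lam := by
        rw [Real.mul_rpow hc (by positivity), Real.mul_rpow (by positivity) (by positivity),
          Real.mul_rpow (by positivity) hlam, Real.mul_rpow hμ (abs_nonneg t), hpow, decayRate]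

lemma hasDerivAt_mul_m1_comp_mul (hμ : 0 < μ) (t z : ℝ) {ξ : ℝ} (hξ : 0 < ξ) :
    HasDerivAt (fun ξ ↦ t / √μ * m1 (√μ * ξ) + z * ξ) (t * m1Deriv (√μ * ξ) + z) ξ := by
  have hsqrt : 0 < √μ := Real.sqrt_pos.2 hμ
  have hm1 := (hasDerivAt_m1 (mul_pos hsqrt hξ)).comp ξ (hasDerivAt_const_mul (√μ))
  refine ((hm1.const_mul (t / √μ)).add (hasDerivAt_const_mul z)).congr_deriv ?_
  field_simp

lemma hasDerivAt_mul_m1Deriv_comp_mul (hμ : 0 < μ) (t z : ℝ) {ξ : ℝ} (hξ : 0 < ξ) :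
    HasDerivAt (fun ξ ↦ t * m1Deriv (√μ * ξ) + z) (t * (-m1Curvature (√μ * ξ) * √μ)) ξ :=
  (((hasDerivAt_m1Deriv (mul_pos (Real.sqrt_pos.2 hμ) hξ)).comp ξ
    (hasDerivAt_const_mul (√μ))).const_mul t).add_const z

lemma intervalIntegral_norm_deriv_comp_div_le (hlam : 0 < lam) {a b : ℝ} (hab : a ≤ b)
    (hβ : Integrable (deriv β)) :
    ∫ ξ in a..b, ‖lam⁻¹ • deriv β (ξ / lam)‖ ≤ ∫ s, ‖deriv β s‖ := by
  have hscale : ∫ ξ in a..b, ‖lam⁻¹ • deriv β (ξ / lam)‖ =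
      ∫ s in (a / lam)..(b / lam), ‖deriv β s‖ := by
    simp_rw [norm_smul, norm_inv, Real.norm_of_nonneg hlam.le]
    rw [intervalIntegral.integral_const_mul,
      intervalIntegral.inv_mul_integral_comp_div (f := fun s ↦ ‖deriv β s‖)]
  rw [hscale, intervalIntegral.integral_of_le (by gcongr)]
  exact setIntegral_le_integral hβ.norm (Filter.Eventually.of_forall fun s ↦ norm_nonneg _)

lemma exp_mul_localizedSymbol (μ t lam : ℝ) (β : ℝ → ℂ) (x ξ : ℝ) :
    Complex.exp ((2 * Real.pi * inner ℝ ξ x : ℝ) * Complex.I) • localizedSymbol μ t lam β ξ =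
      Complex.exp (Complex.I * (t / √μ * m1 (√μ * ξ) + 2 * Real.pi * x * ξ : ℝ)) *
        β (ξ / lam) := by
  rw [localizedSymbol, smul_eq_mul, ← mul_assoc, ← Complex.exp_add]
  congr 2
  simp only [RCLike.inner_apply, Real.ringHom_apply]
  push_cast
  ring

lemma localizedSymbol_neg (μ t lam : ℝ) (β : ℝ → ℂ) (ξ : ℝ) :
    localizedSymbol μ t lam β (-ξ) = localizedSymbol μ (-t) lam (fun s ↦ β (-s)) ξ := by
  simp only [localizedSymbol, mul_neg, m1_neg, neg_div, neg_mul]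

lemma exists_le_abs_mul_m1Curvature_of_dyadic :
    ∃ c : ℝ, 0 < c ∧ ∀ ⦃μ lam ξ : ℝ⦄, 0 < μ → 0 < lam → ξ ∈ Icc (lam / 2) (2 * lam) → ∀ t : ℝ,
      |t| * √μ * (c * (√μ * lam * jap (√μ * lam) ^ (-(5 / 2) : ℝ))) ≤
        |t * (-m1Curvature (√μ * ξ) * √μ)| := by
  obtain ⟨c, hc, hcurv⟩ := exists_mul_jap_rpow_le_m1Curvature_of_dyadic
  refine ⟨c, hc, fun μ lam ξ hμ hlam hξ t ↦ ?_⟩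
  have hsqrt : 0 < √μ := Real.sqrt_pos.2 hμ
  have hscaled : √μ * ξ ∈ Icc (√μ * lam / 2) (2 * (√μ * lam)) :=
    ⟨by rw [mul_div_assoc]; gcongr; exact hξ.1, by rw [mul_left_comm]; gcongr; exact hξ.2⟩
  calc _ ≤ |t| * √μ * |m1Curvature (√μ * ξ)| := by
        refine mul_le_mul_of_nonneg_left ?_ (by positivity)
        exact (hcurv _ _ (by positivity) hscaled).trans (le_abs_self _)
    _ = _ := by
        rw [abs_mul, abs_mul, abs_neg, abs_of_pos hsqrt]
        ring

lemma exists_norm_intervalIntegral_exp_smul_localizedSymbol_le :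
    ∃ C : ℝ, 0 < C ∧ ∀ ⦃μ t lam : ℝ⦄ ⦃β : ℝ → ℂ⦄, 0 < μ → t ≠ 0 → 0 < lam →
      ContDiff ℝ 1 β → HasCompactSupport β → β 2 = 0 → ∀ x : ℝ,
      ‖∫ ξ in (lam / 2)..(2 * lam), Complex.exp ((2 * Real.pi * inner ℝ ξ x : ℝ) * Complex.I) •
          localizedSymbol μ t lam β ξ‖ ≤
        C * (∫ s, ‖deriv β s‖) * decayRate μ t lam := by
  obtain ⟨c, hc, hcurv⟩ := exists_le_abs_mul_m1Curvature_of_dyadic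
  refine ⟨6 * c ^ (-(1 : ℝ) / 2), by positivity, fun μ t lam β hμ ht hlam hβ hβc hβ2 x ↦ ?_⟩
  have hle : lam / 2 ≤ 2 * lam := by linarith
  have hpos : ∀ ξ ∈ Icc (lam / 2) (2 * lam), 0 < ξ := fun ξ hξ ↦ (half_pos hlam).trans_le hξ.1
  have hderiv : Continuous (deriv β) := hβ.continuous_deriv_one
  have hκ : 0 < |t| * √μ * (c * (√μ * lam * jap (√μ * lam) ^ (-(5 / 2) : ℝ))) := by
    have hjap := one_pos.trans_le (one_le_jap (√μ * lam))
    positivity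
  have hψ (ξ : ℝ) : HasDerivAt (fun ξ ↦ β (ξ / lam)) (lam⁻¹ • deriv β (ξ / lam)) ξ := by
    simpa [Function.comp_def] using (hβ.differentiable_one (ξ / lam)).hasDerivAt.scomp ξ
      ((hasDerivAt_id ξ).div_const lam)
  have hvdc := norm_integral_exp_phase_mul_le hle hκ
    (fun ξ hξ ↦ hasDerivAt_mul_m1_comp_mul hμ t (2 * Real.pi * x) (hpos ξ hξ))
    (fun ξ hξ ↦ hasDerivAt_mul_m1Deriv_comp_mul hμ t (2 * Real.pi * x) (hpos ξ hξ))
    (fun ξ hξ ↦ hcurv hμ hlam hξ t)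
    (fun ξ _ ↦ hψ ξ) (Continuous.intervalIntegrable (by fun_prop) _ _)
  rw [mul_div_cancel_right₀ _ hlam.ne', hβ2, norm_zero, zero_add] at hvdc
  simp_rw [exp_mul_localizedSymbol]
  calc _ ≤ _ := hvdc
    _ ≤ _ := mul_le_mul_of_nonneg_left (intervalIntegral_norm_deriv_comp_div_le hlam hle
          (hderiv.integrable_of_hasCompactSupport hβc.deriv)) (by positivity)
    _ = _ := by
        rw [div_eq_mul_one_div, one_div_sqrt_eq_mul_decayRate hc.le hμ.le hlam.le]
        ring

lemma integral_eq_integral_add_integral_comp_neg {E : Type*} [NormedAddCommGroup E]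
    [NormedSpace ℝ E] {a b : ℝ} (ha : 0 ≤ a) (hab : a ≤ b) {h : ℝ → E} (hh : Integrable h)
    (hzero : ∀ x, |x| ∉ Ioc a b → h x = 0) :
    ∫ x, h x = (∫ x in a..b, h x) + ∫ x in a..b, h (-x) := by
  have hhalf (k : ℝ → E) (hk : ∀ x, |x| ∉ Ioc a b → k x = 0) :
      ∫ x in Ioi 0, k x = ∫ x in a..b, k x := by
    rw [intervalIntegral.integral_of_le hab]
    refine setIntegral_eq_of_subset_of_forall_sdiff_eq_zero measurableSet_Ioi
      (fun x hx ↦ ha.trans_lt hx.1) fun x hx ↦ hk x ?_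
    rw [abs_of_pos hx.1]
    exact hx.2
  rw [← hhalf h hzero, ← hhalf (fun x ↦ h (-x)) fun x hx ↦ hzero _ (by rwa [abs_neg]),
    integral_comp_neg_Ioi, neg_zero, add_comm]
  exact (intervalIntegral.integral_Iic_add_Ioi hh.integrableOn hh.integrableOn).symm

lemma hasCompactSupport_of_eq_zero_of_abs_notMem_Ioo {E : Type*} [Zero E] {a b : ℝ} {h : ℝ → E}
    (hzero : ∀ x, |x| ∉ Ioo a b → h x = 0) : HasCompactSupport h := by
  refine HasCompactSupport.of_support_subset_isCompact (isCompact_Icc (a := -b) (b := b))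
    fun x hx ↦ abs_le.1 ?_
  by_contra hxb
  exact hx (hzero x fun hmem ↦ hxb hmem.2.le)

lemma integrable_localizedSymbol (hlam : lam ≠ 0) (hβ : Integrable β) (μ t : ℝ) :
    Integrable (localizedSymbol μ t lam β) := by
  have hm1 := measurable_m1
  exact (hβ.comp_div hlam).bdd_mul (c := 1) (Measurable.aestronglyMeasurable (by fun_prop))
    (Filter.Eventually.of_forall fun ξ ↦ (Complex.norm_exp_I_mul_ofReal _).le)

lemma exists_norm_fourierInv_localizedSymbol_le :
    ∃ C : ℝ, 0 < C ∧ ∀ ⦃μ t lam : ℝ⦄ ⦃β : ℝ → ℂ⦄, 0 < μ → t ≠ 0 → 0 < lam →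
      ContDiff ℝ 1 β → (∀ s, |s| ∉ Ioo (1 / 2) 2 → β s = 0) → ∀ x : ℝ,
      ‖𝓕⁻ (localizedSymbol μ t lam β) x‖ ≤ C * (∫ s, ‖deriv β s‖) * decayRate μ t lam := by
  obtain ⟨C, hC, hhalf⟩ := exists_norm_intervalIntegral_exp_smul_localizedSymbol_le
  refine ⟨2 * C, by positivity, fun μ t lam β hμ ht hlam hβ hzero x ↦ ?_⟩
  have hβc : HasCompactSupport β := hasCompactSupport_of_eq_zero_of_abs_notMem_Ioo hzero
  have hpos := hhalf hμ ht hlam hβ hβc (hzero 2 (by simp)) x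
  have hneg := hhalf (β := fun s ↦ β (-s)) hμ (neg_ne_zero.2 ht) hlam (hβ.comp contDiff_neg)
    (hβc.comp_homeomorph (Homeomorph.neg ℝ)) (hzero (-2) (by simp)) (-x)
  have hderiv_neg : ∫ s, ‖deriv (fun s ↦ β (-s)) s‖ = ∫ s, ‖deriv β s‖ := by
    simp_rw [deriv_comp_neg, norm_neg]
    exact integral_neg_eq_self (fun s ↦ ‖deriv β s‖) volume
  rw [hderiv_neg, decayRate_neg] at hneg
  have hint : Integrable fun ξ ↦ Complex.exp ((2 * Real.pi * inner ℝ ξ x : ℝ) * Complex.I) •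
      localizedSymbol μ t lam β ξ :=
    (integrable_localizedSymbol hlam.ne' (hβ.continuous.integrable_of_hasCompactSupport hβc) μ
      t).bdd_mul (c := 1) (by fun_prop)
        (Filter.Eventually.of_forall fun ξ ↦ (Complex.norm_exp_ofReal_mul_I _).le)
  rw [Real.fourierInv_eq', integral_eq_integral_add_integral_comp_neg (half_pos hlam).le
    (by linarith : lam / 2 ≤ 2 * lam) hint fun ξ hξ ↦ ?_]
  · simp_rw [localizedSymbol_neg, inner_neg_left, ← inner_neg_right]
    calc _ ≤ _ := norm_add_le_of_le hpos hneg
      _ = _ := by ring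
  · rw [exp_mul_localizedSymbol, hzero (ξ / lam) fun h ↦ hξ ?_, mul_zero]
    rw [abs_div, abs_of_pos hlam] at h
    exact ⟨by linarith [(lt_div_iff₀ hlam).1 h.1], ((div_lt_iff₀ hlam).1 h.2).le⟩

end Kernel

section FourierMultiplier

variable {V : Type*} [NormedAddCommGroup V] [InnerProductSpace ℝ V] [FiniteDimensional ℝ V]
  [MeasurableSpace V] [BorelSpace V] {m f : V → ℂ}

lemma fourier_exp_inner_mul_eq_fourierInv_sub (m : V → ℂ) (x y : V) :
    𝓕 (fun ξ ↦ Complex.exp ((2 * Real.pi * inner ℝ ξ x : ℝ) * Complex.I) * m ξ) y =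
      𝓕⁻ m (x - y) := by
  rw [Real.fourier_eq', Real.fourierInv_eq']
  congr 1 with ξ
  simp only [smul_eq_mul]
  rw [← mul_assoc, ← Complex.exp_add, inner_sub_right]
  congr 2
  push_cast
  ring

lemma fourierInv_mul_fourier_eq_convolution (hm : Integrable m) (hf : Integrable f) :
    𝓕⁻ (fun ξ ↦ m ξ * 𝓕 f ξ) = f ⋆[ContinuousLinearMap.mul ℂ ℂ] 𝓕⁻ m := by
  ext x
  set g : V → ℂ := fun ξ ↦ Complex.exp ((2 * Real.pi * inner ℝ ξ x : ℝ) * Complex.I) * m ξ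
  have hg : Integrable g :=
    hm.bdd_mul (c := 1) (by fun_prop)
      (Filter.Eventually.of_forall fun ξ ↦ (Complex.norm_exp_ofReal_mul_I _).le)
  have hdual : ∫ ξ, 𝓕 f ξ * g ξ = ∫ y, f y * 𝓕 g y := by
    simpa [flip_innerₗ] using! VectorFourier.integral_fourierIntegral_smul_eq_flip (L := innerₗ V)
      (μ := volume) (ν := volume) Real.continuous_fourierChar continuous_inner hf hg
  calc 𝓕⁻ (fun ξ ↦ m ξ * 𝓕 f ξ) x
      = ∫ ξ, 𝓕 f ξ * g ξ := by
        rw [Real.fourierInv_eq']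
        congr 1 with ξ
        simp only [g, smul_eq_mul]
        ring
    _ = ∫ y, f y * 𝓕⁻ m (x - y) := by
        simp_rw [hdual, g, fourier_exp_inner_mul_eq_fourierInv_sub]

lemma fourier_fourierInv_mul_fourier (b : 𝓢(V, ℂ)) (hf : Integrable f) :
    𝓕 (𝓕⁻ (fun ξ ↦ b ξ * 𝓕 f ξ)) = fun ξ ↦ b ξ * 𝓕 f ξ := by
  have hinv : 𝓕 (𝓕⁻ (b : V → ℂ)) = b := by
    rw [← SchwartzMap.fourierInv_coe, ← SchwartzMap.fourier_coe,
      FourierTransform.fourier_fourierInv_eq]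
  have hb : Integrable (𝓕⁻ (b : V → ℂ)) := by
    rw [← SchwartzMap.fourierInv_coe]
    exact (𝓕⁻ b).integrable
  ext ξ
  rw [fourierInv_mul_fourier_eq_convolution b.integrable hf,
    Real.fourier_mul_convolution_eq hf hb, hinv, mul_comm]

lemma eLpNorm_fourierInv_mul_fourier_top_le {A : ℝ} (hm : Integrable m) (hf : Integrable f)
    (hA : ∀ x, ‖𝓕⁻ m x‖ ≤ A) :
    eLpNorm (𝓕⁻ (fun ξ ↦ m ξ * 𝓕 f ξ)) ⊤ volume ≤ ENNReal.ofReal A * eLpNorm f 1 volume := by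
  rw [fourierInv_mul_fourier_eq_convolution hm hf, eLpNorm_exponent_top,
    eLpNorm_one_eq_lintegral_enorm, ← lintegral_const_mul' _ _ ENNReal.ofReal_ne_top]
  refine eLpNormEssSup_le_of_ae_enorm_bound (Filter.Eventually.of_forall fun x ↦ ?_)
  refine (enorm_integral_le_lintegral_enorm _).trans (lintegral_mono fun y ↦ ?_)
  rw [ContinuousLinearMap.mul_apply', enorm_mul, mul_comm]
  gcongr
  rw [← ofReal_norm]
  exact ENNReal.ofReal_le_ofReal (hA _)

end FourierMultiplier

section LittlewoodPaley

/-- The Littlewood–Paley profile `β(|s|) = χ(|s|) - χ(2|s|)`, extended to an even complex-valued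
function on `ℝ` so that the multiplier of `P_λ` is its rescaling by `λ`. -/
def dyadicProfile (χ : ℝ → ℝ) (s : ℝ) : ℂ := ((χ |s| - χ (2 * |s|) : ℝ) : ℂ)

variable {χ : ℝ → ℝ}

lemma dyadicProfile_eq_zero_of_abs_le (hone : ∀ s ∈ Icc (-1) 1, χ s = 1) {s : ℝ}
    (hs : |s| ≤ 1 / 2) : dyadicProfile χ s = 0 := by
  have habs := abs_nonneg s
  simp [dyadicProfile, hone |s| ⟨by linarith, by linarith⟩,
    hone (2 * |s|) ⟨by linarith, by linarith⟩]

lemma dyadicProfile_eq_zero_of_le_abs (hsupp : Function.support χ ⊆ Ioo (-2) 2) {s : ℝ}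
    (hs : 2 ≤ |s|) : dyadicProfile χ s = 0 := by
  have hχ_zero (r : ℝ) (hr : 2 ≤ r) : χ r = 0 :=
    Function.notMem_support.1 fun hmem ↦ (hsupp hmem).2.not_ge hr
  simp [dyadicProfile, hχ_zero |s| hs, hχ_zero (2 * |s|) (by linarith)]

lemma dyadicProfile_eq_zero_of_abs_notMem_Ioo (hsupp : Function.support χ ⊆ Ioo (-2) 2)
    (hone : ∀ s ∈ Icc (-1) 1, χ s = 1) {s : ℝ} (hs : |s| ∉ Ioo (1 / 2) 2) :
    dyadicProfile χ s = 0 :=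
  (le_or_gt |s| (1 / 2)).elim (dyadicProfile_eq_zero_of_abs_le hone) fun hs_large ↦
    dyadicProfile_eq_zero_of_le_abs hsupp (not_lt.1 fun h ↦ hs ⟨hs_large, h⟩)

lemma hasCompactSupport_dyadicProfile (hsupp : Function.support χ ⊆ Ioo (-2) 2)
    (hone : ∀ s ∈ Icc (-1) 1, χ s = 1) : HasCompactSupport (dyadicProfile χ) :=
  hasCompactSupport_of_eq_zero_of_abs_notMem_Ioo fun _ ↦
    dyadicProfile_eq_zero_of_abs_notMem_Ioo hsupp hone

lemma contDiff_dyadicProfile {n : ℕ∞} (hχ : ContDiff ℝ n χ)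
    (hone : ∀ s ∈ Icc (-1) 1, χ s = 1) : ContDiff ℝ n (dyadicProfile χ) := by
  rw [contDiff_iff_contDiffAt]
  intro s
  rcases eq_or_ne s 0 with rfl | hs
  · refine contDiffAt_const (c := 0) |>.congr_of_eventuallyEq ?_
    filter_upwards [Metric.ball_mem_nhds (0 : ℝ) one_half_pos] with r hr
    rw [mem_ball_zero_iff, Real.norm_eq_abs] at hr
    exact dyadicProfile_eq_zero_of_abs_le hone hr.le
  · have habs : ContDiffAt ℝ n (fun r : ℝ ↦ |r|) s := contDiffAt_abs hs
    exact Complex.ofRealCLM.contDiff.contDiffAt.comp s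
      ((hχ.contDiffAt.comp s habs).sub (hχ.contDiffAt.comp s (contDiffAt_const.mul habs)))

lemma proj1_eq_fourierInv_dyadicProfile (χ : ℝ → ℝ) {lam : ℝ} (hlam : 0 < lam) (f : ℝ → ℂ) :
    proj1 χ lam f = 𝓕⁻ (fun ξ ↦ dyadicProfile χ (ξ / lam) * 𝓕 f ξ) := by
  simp only [proj1, dyadicProfile, abs_div, abs_of_pos hlam, mul_div_assoc]

lemma prop1_proj1_eq_fourierInv_localizedSymbol (hχ : ContDiff ℝ (⊤ : ℕ∞) χ)
    (hsupp : Function.support χ ⊆ Ioo (-2) 2) (hone : ∀ s ∈ Icc (-1) 1, χ s = 1)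
    {lam : ℝ} (hlam : 0 < lam) (μ t : ℝ) {f : ℝ → ℂ} (hf : Integrable f) :
    prop1 μ t (proj1 χ lam f) =
      𝓕⁻ (fun ξ ↦ localizedSymbol μ t lam (dyadicProfile χ) ξ * 𝓕 f ξ) := by
  have hsmooth : ContDiff ℝ (⊤ : ℕ∞) (fun ξ ↦ dyadicProfile χ (ξ / lam)) :=
    (contDiff_dyadicProfile hχ hone).comp (contDiff_id.div_const lam)
  have hcompact : HasCompactSupport (fun ξ ↦ dyadicProfile χ (ξ / lam)) := by
    simpa only [smul_eq_mul, div_eq_inv_mul] using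
      (hasCompactSupport_dyadicProfile hsupp hone).comp_smul (inv_ne_zero hlam.ne')
  have hproj : 𝓕 (proj1 χ lam f) = fun ξ ↦ dyadicProfile χ (ξ / lam) * 𝓕 f ξ := by
    rw [proj1_eq_fourierInv_dyadicProfile χ hlam]
    exact fourier_fourierInv_mul_fourier (hcompact.toSchwartzMap hsmooth) hf
  simp_rw [prop1, hproj, localizedSymbol, mul_assoc]

end LittlewoodPaley

theorem dispersive_decay_1d_general (χ : ℝ → ℝ) (hχ : ContDiff ℝ (⊤ : ℕ∞) χ)
    (hsupp : Function.support χ ⊆ Ioo (-2) 2) (hone : ∀ s ∈ Icc (-1) 1, χ s = 1) :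
    ∃ C : ℝ, 0 < C ∧ ∀ μ : ℝ, 0 < μ → ∀ lam : ℝ, 0 < lam → ∀ t : ℝ, t ≠ 0 →
      ∀ f : ℝ → ℂ, Integrable f →
        eLpNorm (prop1 μ t (proj1 χ lam f)) ⊤ volume ≤
          ENNReal.ofReal (C * μ ^ (-(1 : ℝ) / 2) * |t| ^ (-(1 : ℝ) / 2) *
              lam ^ (-(1 : ℝ) / 2) * jap (√μ * lam) ^ ((5 : ℝ) / 4)) * eLpNorm f 1 volume := by
  obtain ⟨C, hC, hkernel⟩ := exists_norm_fourierInv_localizedSymbol_le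
  set β := dyadicProfile χ
  have hβ : ContDiff ℝ 1 β :=
    (contDiff_dyadicProfile hχ hone).of_le (by norm_cast)
  have hβ_int : Integrable β :=
    hβ.continuous.integrable_of_hasCompactSupport (hasCompactSupport_dyadicProfile hsupp hone)
  refine ⟨C * ((∫ s, ‖deriv β s‖) + 1), by positivity, fun μ hμ lam hlam t ht f hf ↦ ?_⟩
  rw [prop1_proj1_eq_fourierInv_localizedSymbol hχ hsupp hone hlam μ t hf]
  refine eLpNorm_fourierInv_mul_fourier_top_le (integrable_localizedSymbol hlam.ne' hβ_int μ t) hf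
    fun x ↦ ?_
  calc ‖𝓕⁻ (localizedSymbol μ t lam β) x‖
      ≤ C * (∫ s, ‖deriv β s‖) * decayRate μ t lam :=
        hkernel hμ ht hlam hβ (fun s ↦ dyadicProfile_eq_zero_of_abs_notMem_Ioo hsupp hone) x
    _ ≤ C * ((∫ s, ‖deriv β s‖) + 1) * decayRate μ t lam := by
        have hrate := decayRate_nonneg hμ.le hlam.le t
        gcongr
        exact le_add_of_nonneg_right zero_le_one
    _ = _ := by
        rw [decayRate]
        ring

/-- For `μ ∈ (0,1]` there is `C`, independent of `μ`, such that for all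
`λ > 0`, `t ≠ 0` and Schwartz `f` on `ℝ`:
`‖S_{μ,1}(t) P_λ f‖_{L^∞} ≤ C μ^{-1/2} |t|^{-1/2} λ^{-1/2} ⟨√μ λ⟩^{5/4} ‖f‖_{L^1}`. -/
theorem dispersive_decay_1d (χ : ℝ → ℝ) (hχ : ContDiff ℝ (⊤ : ℕ∞) χ)
    (hsupp : Function.support χ ⊆ Set.Ioo (-2 : ℝ) 2)
    (hone : ∀ s ∈ Set.Icc (-1 : ℝ) 1, χ s = 1) :
    ∃ C : ℝ, 0 < C ∧
      ∀ μ : ℝ, 0 < μ → μ ≤ 1 →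
        ∀ lam : ℝ, 0 < lam → ∀ t : ℝ, t ≠ 0 → ∀ f : 𝓢(ℝ, ℂ),
          eLpNorm (prop1 μ t (proj1 χ lam ⇑f)) ⊤ volume
            ≤ ENNReal.ofReal (C * μ ^ (-(1 : ℝ) / 2) * |t| ^ (-(1 : ℝ) / 2) *
                lam ^ (-(1 : ℝ) / 2) * jap (Real.sqrt μ * lam) ^ ((5 : ℝ) / 4)) *
              eLpNorm (⇑f) 1 volume := by
  obtain ⟨C, hC, hdecay⟩ := dispersive_decay_1d_general χ hχ hsupp hone
  exact ⟨C, hC, fun μ hμ _ lam hlam t ht f ↦ hdecay μ hμ lam hlam t ht f f.integrable⟩
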